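/- arXiv:1805.04261 — 3 statements merged into one kernel-verified Lean document; each statement's English description precedes it below -/
import Mathlib

section
/- Let d ≥ 1 and let σ be a sign pattern of length d+1 whose Descartes pair is (d−1, 1) (resp. (1, d−1)), and let ((pos_0, neg_0), (pos_1, neg_1), ..., (pos_{d−1}, neg_{d−1})) be the unique SAP for σ with pos_0 + neg_0 = d, so that (pos_0, neg_0) = (d−1, 1) (resp. (1, d−1)). Then for every ν ∈ {1, ..., ⌊(d−1)/2⌋}, every SAP for σ of the form ((d−1−2ν, 1), (pos_1, neg_1), ..., (pos_{d−1}, neg_{d−1})) (resp. ((1, d−1−2ν), (pos_1, neg_1), ..., (pos_{d−1}, neg_{d−1}))) is realizable with the sign pattern σ. -/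
open Polynomial

/-- Number of sign changes among consecutive entries `s 0, …, s n`. -/
def signChanges (s : ℕ → ℤ) (n : ℕ) : ℕ :=
  ((Finset.range n).filter (fun i => s i * s (i + 1) < 0)).card

/-- Number of sign preservations among consecutive entries `s 0, …, s n`. -/
def signPres (s : ℕ → ℤ) (n : ℕ) : ℕ :=
  ((Finset.range n).filter (fun i => 0 < s i * s (i + 1))).card

/-- `s` encodes a sign pattern of length `d+1` (entries `s 0, …, s d`, each `±1`,
first entry `+1`). -/
def IsSignPattern (d : ℕ) (s : ℕ → ℤ) : Prop :=
  s 0 = 1 ∧ ∀ i ≤ d, s i = 1 ∨ s i = -1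

/-- `pn k = (pos_k, neg_k)`, `k = 0, …, d-1`, is a sequence of admissible pairs (SAP)
for the sign pattern `s` of length `d+1`: each pair is admissible for the truncated
pattern `σ_k` (of length `d+1-k`, with sign changes `signChanges s (d-k)` and sign
preservations `signPres s (d-k)`), the last entry of `σ_k` is `(-1)^{pos_k}`, and the
Rolle-type inequalities and parity condition hold between consecutive pairs. -/
def IsSAP (d : ℕ) (s : ℕ → ℤ) (pn : ℕ → ℕ × ℕ) : Prop :=
  (∀ k < d,
    (pn k).1 ≤ signChanges s (d - k) ∧
    Even ((signChanges s (d - k) : ℤ) - (pn k).1) ∧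
    (pn k).2 ≤ signPres s (d - k) ∧
    Even ((signPres s (d - k) : ℤ) - (pn k).2) ∧
    s (d - k) = (-1) ^ (pn k).1) ∧
  (∀ k, k + 1 < d →
    (pn k).1 ≤ (pn (k + 1)).1 + 1 ∧
    (pn k).2 ≤ (pn (k + 1)).2 + 1 ∧
    (pn k).1 + (pn k).2 ≤ (pn (k + 1)).1 + (pn (k + 1)).2 + 1 ∧
    Even (((pn (k + 1)).1 : ℤ) + (pn (k + 1)).2 + 3 - (pn k).1 - (pn k).2))

/-- The `k`-th derivative of a real polynomial. -/
noncomputable def iterDeriv : ℕ → Polynomial ℝ → Polynomial ℝ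
  | 0, P => P
  | k + 1, P => Polynomial.derivative (iterDeriv k P)

/-- `P` has exactly `pos` positive real roots and exactly `neg` negative real roots,
all of them simple. -/
def CountRoots (P : Polynomial ℝ) (pos neg : ℕ) : Prop :=
  {x : ℝ | 0 < x ∧ P.eval x = 0}.ncard = pos ∧
  {x : ℝ | x < 0 ∧ P.eval x = 0}.ncard = neg ∧
  ∀ x : ℝ, P.eval x = 0 → (Polynomial.derivative P).eval x ≠ 0

/-- The couple (sign pattern `s`, SAP `pn`) of degree `d` is realizable: there is a
monic real polynomial of degree `d`, with all coefficients nonzero, whose coefficient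
signs define the pattern `s` (the sign of the coefficient of `x^(d-i)` is `s i`), and
such that for `k = 0, …, d-1` the `k`-th derivative has exactly `(pn k).1` positive and
`(pn k).2` negative real roots, all simple. -/
def Realizable (d : ℕ) (s : ℕ → ℤ) (pn : ℕ → ℕ × ℕ) : Prop :=
  ∃ P : Polynomial ℝ, P.Monic ∧ P.natDegree = d ∧
    (∀ j ≤ d, P.coeff j ≠ 0) ∧
    (∀ i ≤ d, 0 < (s i : ℝ) * P.coeff (d - i)) ∧
    ∀ k < d, CountRoots (iterDeriv k P) (pn k).1 (pn k).2

/-!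
Adding a small term `t x ^ (n + 1)` to a polynomial of degree `n` keeps all its roots and creates
one root far away, which is positive or negative according as the two leading coefficients now have
opposite or equal signs; the same holds for all its derivatives at once. Building a polynomial from
its constant term upwards in this way realizes the SAP with `pos_0 + neg_0 = d`.

To lose `u` positive and `v` negative roots, with `u` and `v` even, stop this construction in degree
`u + v + 1`, when the polynomial has at least `u` positive and at least `v` negative roots. Making
its constant term huge changes no derivative and destroys all but one of the `u + v + 1` roots, the
survivor being determined by parity. Then add the remaining leading terms as before.
-/

open Filter Topology

section LevelSets

variable {X Y : Type*} [TopologicalSpace X] [TopologicalSpace Y]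

/-- `f` is locally uniquely solvable at `x`: arbitrarily small neighbourhoods of `x` contain
exactly one solution of `f x' = y` for every `y` near `f x`. -/
def LocallyUniquelySolvableAt (f : X → Y) (x : X) : Prop :=
  ∀ W ∈ 𝓝 x, ∃ V ∈ 𝓝 x, V ⊆ W ∧ ∀ᶠ y in 𝓝 (f x), ∃! x', x' ∈ V ∧ f x' = y

lemma LocallyUniquelySolvableAt.of_hasStrictDerivAt {𝕜 : Type*} [NontriviallyNormedField 𝕜]
    [CompleteSpace 𝕜] {f : 𝕜 → 𝕜} {f' z : 𝕜} (hf : HasStrictDerivAt f f' z) (hf' : f' ≠ 0) :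
    LocallyUniquelySolvableAt f z := by
  intro W hW
  set g := hf.localInverse f f' z hf'
  have hgz : g (f z) = z := (hf.eventually_left_inverse hf').self_of_nhds
  have hg : Tendsto g (𝓝 (f z)) (𝓝 (g (f z))) :=
    (hf.to_localInverse hf').hasDerivAt.continuousAt
  rw [hgz] at hg
  have hV : W ∩ {x | g (f x) = x} ∈ 𝓝 z := inter_mem hW (hf.eventually_left_inverse hf')
  refine ⟨_, hV, Set.inter_subset_left, ?_⟩
  filter_upwards [hg hV, hf.eventually_right_inverse hf'] with y hgy hfg
  refine ⟨g y, ⟨hgy, hfg⟩, ?_⟩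
  rintro x ⟨⟨-, hgx⟩, rfl⟩
  exact hgx.symm

lemma eventually_ncard_inter_fiber_eq [T2Space X] {f : X → Y} (hf : IsClosedMap f)
    {K : Set X} (hK : IsClosed K) {y₀ : Y} (hfin : (K ∩ f ⁻¹' {y₀}).Finite)
    (hint : K ∩ f ⁻¹' {y₀} ⊆ interior K)
    (hloc : ∀ x ∈ K ∩ f ⁻¹' {y₀}, LocallyUniquelySolvableAt f x) :
    ∀ᶠ y in 𝓝 y₀, (K ∩ f ⁻¹' {y}).ncard = (K ∩ f ⁻¹' {y₀}).ncard := by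
  obtain ⟨U, hU, hdisj⟩ := hfin.t2_separation
  have hnhds (x) (hx : x ∈ K ∩ f ⁻¹' {y₀}) : U x ∩ interior K ∈ 𝓝 x :=
    inter_mem ((hU x).2.mem_nhds (hU x).1) (isOpen_interior.mem_nhds (hint hx))
  choose! V hV hVU hsol using fun x hx => hloc x hx _ (hnhds x hx)
  have hcover : ∀ᶠ y in 𝓝 y₀, ∀ x' ∈ f ⁻¹' {y}, x' ∈ K → ∃ x ∈ K ∩ f ⁻¹' {y₀}, x' ∈ V x := by
    refine hf.eventually_nhds_fiber y₀ fun x hx => ?_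
    by_cases hxK : x ∈ K
    · filter_upwards [hV x ⟨hxK, hx⟩] with x' hx' _ using ⟨x, ⟨hxK, hx⟩, hx'⟩
    · filter_upwards [hK.isOpen_compl.mem_nhds hxK] with x' hx' hx'K using absurd hx'K hx'
  have hsol' : ∀ᶠ y in 𝓝 y₀, ∀ x ∈ K ∩ f ⁻¹' {y₀}, ∃! x', x' ∈ V x ∧ f x' = y :=
    (eventually_all_finite hfin).2 fun x hx => hx.2 ▸ hsol x hx
  filter_upwards [hcover, hsol'] with y hcov hsoly
  choose! φ hφ hφuniq using hsoly
  symm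
  refine Set.ncard_congr (fun x _ => φ x)
    (fun x hx => ⟨interior_subset (hVU x hx (hφ x hx).1).2, (hφ x hx).2⟩) ?_ ?_
  · intro x₁ x₂ hx₁ hx₂ heq
    by_contra hne
    refine Set.disjoint_left.1 (hdisj hx₁ hx₂ hne) (hVU x₁ hx₁ (hφ x₁ hx₁).1).1 ?_
    exact heq ▸ (hVU x₂ hx₂ (hφ x₂ hx₂).1).1
  · rintro x' ⟨hx'K, hx'⟩
    obtain ⟨x, hx, hxV⟩ := hcov x' hx' hx'K
    exact ⟨x, hx, (hφuniq x hx x' ⟨hxV, hx'⟩).symm⟩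

lemma eventually_simple_level_set {G : ℝ[X]} (hG : 0 < G.degree) {K : Set ℝ} (hK : IsClosed K)
    (hzero : ∀ y ∈ K, G.eval y = 0 → y ∈ interior K ∧ G.derivative.eval y ≠ 0) :
    ∀ᶠ t in 𝓝 0, {y | y ∈ K ∧ G.eval y = t}.ncard = {y | y ∈ K ∧ G.eval y = 0}.ncard ∧
      ∀ y ∈ K, G.eval y = t → G.derivative.eval y ≠ 0 := by
  have hfin : {y | y ∈ K ∧ G.eval y = 0}.Finite :=
    (G.rootSet_finite ℝ).subset fun y hy => by
      simpa [mem_rootSet, ne_zero_of_degree_gt hG] using hy.2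
  have hclosed : IsClosedMap G.eval := G.isClosedMap_eval
  refine (eventually_ncard_inter_fiber_eq hclosed hK hfin
    (fun y hy => (hzero y hy.1 hy.2).1) fun y hy => .of_hasStrictDerivAt
      (G.hasStrictDerivAt y) (hzero y hy.1 hy.2).2).and ?_
  refine (hclosed.eventually_nhds_fiber (p := fun y => y ∈ K → G.derivative.eval y ≠ 0) 0
    fun y hy => ?_).mono fun t ht y hyK hy => ht y hy hyK
  by_cases hyK : y ∈ K
  · filter_upwards [G.derivative.continuous.continuousAt.eventually_ne (hzero y hyK hy).2]
      with y' hy' _ using hy'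
  · filter_upwards [hK.isOpen_compl.mem_nhds hyK] with y' hy' hy'K using absurd hy'K hy'

end LevelSets

section Polynomials

variable {R : Type*} [Semiring R]

lemma eval_comp_neg_X {S : Type*} [CommRing S] (P : S[X]) (x : S) :
    (P.comp (-X)).eval x = P.eval (-x) := by
  rw [eval_comp, eval_neg, eval_X]

lemma coeff_zero_comp_neg_X {S : Type*} [CommRing S] (P : S[X]) :
    (P.comp (-X)).coeff 0 = P.coeff 0 := by
  rw [coeff_zero_eq_eval_zero, eval_comp_neg_X, neg_zero, coeff_zero_eq_eval_zero]

lemma natDegree_comp_neg_X {S : Type*} [Ring S] (P : S[X]) :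
    (P.comp (-X)).natDegree = P.natDegree :=
  natDegree_eq_of_degree_eq degree_comp_neg_X

lemma natDegree_reverse_of_coeff_zero_ne_zero {P : R[X]} (hP : P.coeff 0 ≠ 0) :
    P.reverse.natDegree = P.natDegree := by
  rw [reverse_natDegree, natTrailingDegree_eq_zero.2 (Or.inr hP), Nat.sub_zero]

lemma reverse_reverse_of_coeff_zero_ne_zero {P : R[X]} (hP : P.coeff 0 ≠ 0) :
    P.reverse.reverse = P := by
  rw [Polynomial.reverse, natDegree_reverse_of_coeff_zero_ne_zero hP, Polynomial.reverse,
    reflect_reflect]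

lemma eval_reverse_eq_pow_mul_eval_inv {K : Type*} [Field K] (P : K[X]) {x : K} (hx : x ≠ 0) :
    P.reverse.eval x = x ^ P.natDegree * P.eval x⁻¹ := by
  let _ : Invertible x⁻¹ := invertibleOfNonzero (inv_ne_zero hx)
  have hrev : P.reverse.eval x * x⁻¹ ^ P.natDegree = P.eval x⁻¹ := by
    simpa only [invOf_eq_inv, inv_inv, eval₂_id] using
      eval₂_reverse_mul_pow (RingHom.id K) x⁻¹ P
  rw [← hrev, mul_left_comm, ← mul_pow, mul_inv_cancel₀ hx, one_pow, mul_one]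

lemma eval_derivative_reverse_ne_zero {𝕜 : Type*} [NontriviallyNormedField 𝕜] {P : 𝕜[X]}
    {x : 𝕜} (hx : x ≠ 0) (hroot : P.eval x⁻¹ = 0) (hsimple : P.derivative.eval x⁻¹ ≠ 0) :
    P.reverse.derivative.eval x ≠ 0 := by
  have hderiv : HasDerivAt (fun y => y ^ P.natDegree * P.eval y⁻¹)
      (P.natDegree * x ^ (P.natDegree - 1) * P.eval x⁻¹ +
        x ^ P.natDegree * (P.derivative.eval x⁻¹ * -(x ^ 2)⁻¹)) x :=
    (hasDerivAt_pow _ x).mul ((P.hasDerivAt x⁻¹).comp x (hasDerivAt_inv hx))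
  have hrev : (fun y => P.reverse.eval y) =ᶠ[𝓝 x] fun y => y ^ P.natDegree * P.eval y⁻¹ := by
    filter_upwards [isOpen_ne.mem_nhds hx] with y hy using eval_reverse_eq_pow_mul_eval_inv P hy
  rw [(P.reverse.hasDerivAt x).unique (hderiv.congr_of_eventuallyEq hrev), hroot]
  simp [hx, hsimple]

lemma natDegree_add_C_mul_X_pow (P : R[X]) {t : R} (ht : t ≠ 0) :
    (P + C t * X ^ (P.natDegree + 1)).natDegree = P.natDegree + 1 := by
  have hnew : (C t * X ^ (P.natDegree + 1)).natDegree = P.natDegree + 1 :=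
    natDegree_C_mul_X_pow _ t ht
  rw [natDegree_add_eq_right_of_natDegree_lt (by omega), hnew]

lemma natDegree_iterate_derivative_eq [IsAddTorsionFree R] (P : R[X]) (k : ℕ) :
    (derivative^[k] P).natDegree = P.natDegree - k := by
  induction k with
  | zero => rfl
  | succ k ih => rw [Function.iterate_succ_apply', natDegree_derivative, ih, Nat.sub_sub]

lemma leadingCoeff_iterate_derivative [IsAddTorsionFree R] {P : R[X]} {k : ℕ}
    (hk : k ≤ P.natDegree) : (derivative^[k] P).leadingCoeff =
      P.natDegree.descFactorial k * P.leadingCoeff := by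
  rw [leadingCoeff, natDegree_iterate_derivative_eq, coeff_iterate_derivative,
    Nat.sub_add_cancel hk, nsmul_eq_mul, leadingCoeff]

end Polynomials

section PositiveRoots

/-- `P` has exactly `m` positive real roots, all simple: one half of `CountRoots`, the other half
being the same statement about `P(-x)`. -/
def HasSimplePosRoots (P : ℝ[X]) (m : ℕ) : Prop :=
  {x : ℝ | 0 < x ∧ P.eval x = 0}.ncard = m ∧
    ∀ x, 0 < x → P.eval x = 0 → P.derivative.eval x ≠ 0

lemma exists_pos_forall_mem_Icc_mul_eval_pos {H : ℝ[X]} (hH : H.coeff 0 ≠ 0) :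
    ∃ r > 0, ∀ y ∈ Set.Icc (-r) r, 0 < H.coeff 0 * H.eval y := by
  have hpos : 0 < H.coeff 0 * H.eval 0 := by
    rw [← coeff_zero_eq_eval_zero]
    exact mul_self_pos.2 hH
  have hnhds : ∀ᶠ y in 𝓝 0, 0 < H.coeff 0 * H.eval y :=
    (continuous_const.mul H.continuous).continuousAt.eventually (lt_mem_nhds hpos)
  obtain ⟨r, hr, hball⟩ := Metric.nhds_basis_closedBall.eventually_iff.1 hnhds
  refine ⟨r, hr, fun y hy => hball ?_⟩
  rwa [Real.closedBall_eq_Icc, zero_sub, zero_add]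

lemma eval_derivative_mul_X_ne_zero {H : ℝ[X]} {m : ℕ} (hH : HasSimplePosRoots H m)
    (hH0 : H.coeff 0 ≠ 0) {y : ℝ} (hy : 0 ≤ y) (hroot : (H * X).eval y = 0) :
    (H * X).derivative.eval y ≠ 0 := by
  have hderiv : (H * X).derivative.eval y = H.derivative.eval y * y + H.eval y := by
    simp only [derivative_mul, derivative_X, mul_one, eval_add, eval_mul, eval_X]
  rw [hderiv]
  rcases hy.eq_or_lt with rfl | hy
  · simpa only [mul_zero, zero_add, ← coeff_zero_eq_eval_zero] using hH0
  · have hHy : H.eval y = 0 := by simpa [hy.ne'] using hroot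
    simpa only [hHy, add_zero] using mul_ne_zero (hH.2 y hy hHy) hy.ne'

lemma HasSimplePosRoots.eventually_Ici {H : ℝ[X]} {m : ℕ} (hH : HasSimplePosRoots H m)
    (hH0 : H.coeff 0 ≠ 0) {a : ℝ} (ha : a ≠ 0)
    (hsign : ∀ y ∈ Set.Icc (-|a|) |a|, 0 < H.coeff 0 * H.eval y) :
    ∀ᶠ t in 𝓝 0, {y | y ∈ Set.Ici a ∧ (H * X).eval y = t}.ncard = m + (if a < 0 then 1 else 0) ∧
      ∀ y ∈ Set.Ici a, (H * X).eval y = t → (H * X).derivative.eval y ≠ 0 := by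
  have hHne : H ≠ 0 := by
    rintro rfl
    exact hH0 (coeff_zero 0)
  have hdeg : 0 < (H * X).degree := by
    rw [← natDegree_pos_iff_degree_pos, natDegree_mul_X hHne]
    exact Nat.succ_pos _
  have hzero (y : ℝ) : (H * X).eval y = 0 ↔ y = 0 ∨ H.eval y = 0 := by
    simp only [eval_mul, eval_X, mul_eq_zero, or_comm]
  have hne (y) (hy : y ∈ Set.Icc (-|a|) |a|) : H.eval y ≠ 0 :=
    right_ne_zero_of_mul (hsign y hy).ne'
  have hfin : {y | 0 < y ∧ H.eval y = 0}.Finite :=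
    (H.rootSet_finite ℝ).subset fun y hy => by simpa [mem_rootSet, hHne] using hy.2
  have hcard : {y | y ∈ Set.Ici a ∧ (H * X).eval y = 0}.ncard = m + if a < 0 then 1 else 0 := by
    rcases ha.lt_or_gt with ha | ha
    · have hinsert : {y | y ∈ Set.Ici a ∧ (H * X).eval y = 0} =
          insert 0 {y | 0 < y ∧ H.eval y = 0} := by
        ext y
        simp only [Set.mem_ofPred_eq, Set.mem_Ici, Set.mem_insert_iff, hzero]
        grind
      rw [hinsert, Set.ncard_insert_of_notMem (fun h => lt_irrefl _ h.1) hfin, hH.1, if_pos ha]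
    · rw [if_neg ha.not_gt, add_zero, ← hH.1]
      congr 1 with y
      simp only [Set.mem_ofPred_eq, Set.mem_Ici, hzero]
      grind
  rw [← hcard]
  refine eventually_simple_level_set hdeg isClosed_Ici fun y hy hy0 => ⟨?_, ?_⟩
  · rw [interior_Ici]
    grind
  · refine eval_derivative_mul_X_ne_zero hH hH0 ?_ hy0
    grind

lemma setOf_pos_mul_X_eq_Ici {H : ℝ[X]} {a t : ℝ} (ht : t ≠ 0)
    (ha : a < 0 ↔ 0 < t * H.coeff 0)
    (hsign : ∀ y ∈ Set.Icc (-|a|) |a|, 0 < H.coeff 0 * H.eval y) :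
    {y | 0 < y ∧ (H * X).eval y = t} = {y | y ∈ Set.Ici a ∧ (H * X).eval y = t} := by
  ext y
  simp only [Set.mem_ofPred_eq, Set.mem_Ici, and_congr_left_iff]
  rintro rfl
  have hy : y ≠ 0 := by
    rintro rfl
    simp at ht
  -- near `0`, a solution `y` of `y * H y = t` has the sign of `t * H 0`
  have hsmall (hyI : y ∈ Set.Icc (-|a|) |a|) : a < 0 ↔ 0 < y := by
    have hval : (H * X).eval y * H.coeff 0 = y * (H.coeff 0 * H.eval y) := by
      simp only [eval_mul, eval_X]
      ring
    rw [ha, hval, mul_pos_iff_of_pos_right (hsign y hyI)]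
  grind

lemma HasSimplePosRoots.eventually_ncard_mul_X_eq {H : ℝ[X]} {m : ℕ}
    (hH : HasSimplePosRoots H m) (hH0 : H.coeff 0 ≠ 0) :
    ∀ᶠ t in 𝓝[≠] 0, {y : ℝ | 0 < y ∧ (H * X).eval y = t}.ncard =
        m + (if 0 < t * H.coeff 0 then 1 else 0) ∧
      ∀ y, 0 < y → (H * X).eval y = t → (H * X).derivative.eval y ≠ 0 := by
  obtain ⟨r, hr, hsign⟩ := exists_pos_forall_mem_Icc_mul_eval_pos hH0
  have hsign' (a : ℝ) (ha : |a| = r) : ∀ y ∈ Set.Icc (-|a|) |a|, 0 < H.coeff 0 * H.eval y := by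
    rwa [ha]
  have hr_abs : |r| = r := abs_of_pos hr
  have hneg_abs : |(-r)| = r := by rw [abs_neg, hr_abs]
  filter_upwards [nhdsWithin_le_nhds (hH.eventually_Ici hH0 hr.ne' (hsign' r hr_abs)),
    nhdsWithin_le_nhds (hH.eventually_Ici hH0 (neg_ne_zero.2 hr.ne') (hsign' (-r) hneg_abs)),
    self_mem_nhdsWithin] with t hnarrow hwide ht
  refine ⟨?_, fun y hy => hwide.2 y ((neg_lt_zero.2 hr).le.trans hy.le)⟩
  by_cases h : 0 < t * H.coeff 0
  · rw [setOf_pos_mul_X_eq_Ici ht (by simp only [neg_lt_zero, hr, h]) (hsign' (-r) hneg_abs),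
      hwide.1, if_pos (neg_lt_zero.2 hr), if_pos h]
  · rw [setOf_pos_mul_X_eq_Ici ht (by simp only [hr.not_gt, h]) (hsign' r hr_abs),
      hnarrow.1, if_neg hr.not_gt, if_neg h]

lemma tendsto_const_mul_nhdsNE_zero {R : Type*} [Semiring R] [NoZeroDivisors R]
    [TopologicalSpace R] [ContinuousMul R] {c : R} (hc : c ≠ 0) :
    Tendsto (fun t => c * t) (𝓝[≠] 0) (𝓝[≠] 0) := by
  refine tendsto_nhdsWithin_iff.2 ⟨?_, ?_⟩
  · exact ((continuous_const_mul c).tendsto' 0 0 (mul_zero c)).mono_left nhdsWithin_le_nhds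
  · filter_upwards [self_mem_nhdsWithin] with t ht using mul_ne_zero hc ht

lemma HasSimplePosRoots.eventually_mul_X_add_C {H : ℝ[X]} {m : ℕ}
    (hH : HasSimplePosRoots H m) (hH0 : H.coeff 0 ≠ 0) :
    ∀ᶠ t in 𝓝[≠] 0, HasSimplePosRoots (H * X + C t) (m + if t * H.coeff 0 < 0 then 1 else 0) := by
  filter_upwards [(tendsto_const_mul_nhdsNE_zero (neg_ne_zero.2 one_ne_zero)).eventually
    (hH.eventually_ncard_mul_X_eq hH0)] with t ht
  have heval (y : ℝ) : (H * X + C t).eval y = 0 ↔ (H * X).eval y = -1 * t := by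
    rw [eval_add, eval_C, neg_one_mul, add_eq_zero_iff_eq_neg]
  simpa only [HasSimplePosRoots, heval, derivative_add, derivative_C, add_zero, neg_mul,
    one_mul, Left.neg_pos_iff] using ht

lemma HasSimplePosRoots.reverse {P : ℝ[X]} {m : ℕ} (hP : HasSimplePosRoots P m) :
    HasSimplePosRoots P.reverse m := by
  have hroot {x : ℝ} (hx : 0 < x) : P.reverse.eval x = 0 ↔ P.eval x⁻¹ = 0 := by
    simp [eval_reverse_eq_pow_mul_eval_inv P hx.ne', hx.ne']
  constructor
  · rw [← hP.1]
    refine Set.ncard_congr (fun x _ => x⁻¹) (fun x hx => ⟨inv_pos.2 hx.1, (hroot hx.1).1 hx.2⟩)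
      (fun x y _ _ hxy => inv_injective hxy) fun y hy => ⟨y⁻¹, ⟨inv_pos.2 hy.1, ?_⟩, inv_inv y⟩
    rw [hroot (inv_pos.2 hy.1), inv_inv]
    exact hy.2
  · intro x hx hx0
    have hx0' := (hroot hx).1 hx0
    exact eval_derivative_reverse_ne_zero hx.ne' hx0' (hP.2 _ (inv_pos.2 hx) hx0')

/- Reversal `x ↦ 1 / x` turns the new leading term into a constant term, and the new root near
infinity into a root near `0`. -/
lemma HasSimplePosRoots.eventually_add_C_mul_X_pow {R : ℝ[X]} {m : ℕ}
    (hR : HasSimplePosRoots R m) (hR0 : R.coeff 0 ≠ 0) :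
    ∀ᶠ t in 𝓝[≠] 0, HasSimplePosRoots (R + C t * X ^ (R.natDegree + 1))
      (m + if t * R.leadingCoeff < 0 then 1 else 0) := by
  have hlead : R.reverse.coeff 0 ≠ 0 := by
    rw [coeff_zero_reverse, leadingCoeff_ne_zero]
    rintro rfl
    exact hR0 (coeff_zero 0)
  have hmul : (R.reverse * X).natDegree = R.natDegree + 1 := by
    rw [natDegree_mul_X (by rintro h; simp [h] at hlead),
      natDegree_reverse_of_coeff_zero_ne_zero hR0]
  filter_upwards [hR.reverse.eventually_mul_X_add_C hlead] with t ht
  have hrev := ht.reverse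
  rwa [reverse_add_C, hmul, reverse_mul_X, reverse_reverse_of_coeff_zero_ne_zero hR0,
    coeff_zero_reverse] at hrev

end PositiveRoots

section LargeConstantTerm

lemma eventually_forall_mem_Icc_eval_add_C_pos (Q : ℝ[X]) (M : ℝ) :
    ∀ᶠ a in atTop, ∀ x ∈ Set.Icc 0 M, 0 < (Q + C a).eval x := by
  obtain ⟨B, hB⟩ := (isCompact_Icc (a := 0) (b := M)).bddBelow_image Q.continuous.continuousOn
  filter_upwards [eventually_gt_atTop (-B)] with a ha x hx
  have hBx : B ≤ Q.eval x := hB (Set.mem_image_of_mem _ hx)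
  rw [eval_add, eval_C]
  linarith

lemma eventually_hasSimplePosRoots_add_C_of_leadingCoeff_pos {Q : ℝ[X]} (hQ : 0 < Q.natDegree)
    (hlead : 0 < Q.leadingCoeff) : ∀ᶠ a in atTop, HasSimplePosRoots (Q + C a) 0 := by
  obtain ⟨M, hM⟩ := eventually_atTop.1 ((Q.tendsto_atTop_of_leadingCoeff_nonneg
    (natDegree_pos_iff_degree_pos.1 hQ) hlead.le).eventually_ge_atTop 0)
  filter_upwards [eventually_forall_mem_Icc_eval_add_C_pos Q M, eventually_gt_atTop 0]
    with a hIcc ha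
  have hpos (x : ℝ) (hx : 0 < x) : 0 < (Q + C a).eval x := by
    rcases le_total x M with hxM | hMx
    · exact hIcc x ⟨hx.le, hxM⟩
    · simpa only [eval_add, eval_C] using add_pos_of_nonneg_of_pos (hM x hMx) ha
  refine ⟨?_, fun x hx hx0 => absurd hx0 (hpos x hx).ne'⟩
  convert Set.ncard_empty ℝ
  exact Set.eq_empty_of_forall_notMem fun x hx => (hpos x hx.1).ne' hx.2

lemma exists_forall_gt_eval_derivative_ne_zero {Q : ℝ[X]} (hQ : 0 < Q.natDegree) :
    ∃ M ≥ 0, ∀ x > M, Q.derivative.eval x ≠ 0 := by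
  have hne : Q.derivative ≠ 0 := derivative_ne_zero.2 hQ.ne'
  obtain ⟨M, hM⟩ := eventually_atTop.1 (eventually_atTop_not_isRoot _ hne)
  exact ⟨max M 0, le_max_right M 0, fun x hx => hM x ((le_max_left M 0).trans hx.le)⟩

/- Past the last zero `M` of `Q'` the function `Q` is injective, and on `[0, M]` it is bounded. -/
lemma eventually_hasSimplePosRoots_add_C_of_leadingCoeff_neg {Q : ℝ[X]} (hQ : 0 < Q.natDegree)
    (hlead : Q.leadingCoeff < 0) : ∀ᶠ a in atTop, HasSimplePosRoots (Q + C a) 1 := by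
  obtain ⟨M, hM0, hM⟩ := exists_forall_gt_eval_derivative_ne_zero hQ
  filter_upwards [eventually_forall_mem_Icc_eval_add_C_pos Q M] with a hIcc
  have hderiv : (Q + C a).derivative = Q.derivative := by simp
  have hMlt (x : ℝ) (hx : 0 < x) (hx0 : (Q + C a).eval x = 0) : M < x := by
    by_contra! hxM
    exact (hIcc x ⟨hx.le, hxM⟩).ne' hx0
  have hinj (x y : ℝ) (hx : M < x) (hxy : x < y) : (Q + C a).eval x ≠ (Q + C a).eval y := by
    intro heq
    obtain ⟨z, hz, hz0⟩ := exists_hasDerivAt_eq_zero hxy (Q + C a).continuousOn heq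
      fun z _ => (Q + C a).hasDerivAt z
    exact hM z (hx.trans hz.1) (hderiv ▸ hz0)
  obtain ⟨N, hN, hMN⟩ := (((Q.tendsto_atBot_of_leadingCoeff_nonpos
    (natDegree_pos_iff_degree_pos.1 hQ) hlead.le).eventually_lt_atBot (-a)).and
    (eventually_ge_atTop M)).exists
  have hneg : (Q + C a).eval N ≤ 0 := by
    rw [eval_add, eval_C]
    linarith
  obtain ⟨x₀, hx₀, hroot⟩ := intermediate_value_Icc' hMN (Q + C a).continuousOn
    ⟨hneg, (hIcc M ⟨hM0, le_rfl⟩).le⟩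
  have hx₀_pos : 0 < x₀ := by
    refine (hM0.trans hx₀.1).lt_of_ne ?_
    rintro rfl
    exact (hIcc 0 ⟨le_rfl, hM0⟩).ne' hroot
  refine ⟨Set.ncard_eq_one.2 ⟨x₀, ?_⟩, fun x hx hx0 => hderiv ▸ hM x (hMlt x hx hx0)⟩
  ext x
  refine ⟨fun hx => ?_, by rintro rfl; exact ⟨hx₀_pos, hroot⟩⟩
  rcases lt_trichotomy x x₀ with h | h | h
  · exact absurd (hx.2.trans hroot.symm) (hinj _ _ (hMlt x hx.1 hx.2) h)
  · exact h
  · exact absurd (hroot.trans hx.2.symm) (hinj _ _ (hMlt x₀ hx₀_pos hroot) h)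

lemma HasSimplePosRoots.C_mul {P : ℝ[X]} {m : ℕ} (hP : HasSimplePosRoots P m) {c : ℝ}
    (hc : c ≠ 0) : HasSimplePosRoots (C c * P) m := by
  simpa [HasSimplePosRoots, hc] using hP

lemma eventually_hasSimplePosRoots_add_C_mul {Q : ℝ[X]} (hQ : 0 < Q.natDegree) {τ : ℝ}
    (hτ : τ ≠ 0) :
    ∀ᶠ a in atTop, HasSimplePosRoots (Q + C (a * τ))
      (if τ * Q.leadingCoeff < 0 then 1 else 0) := by
  have hdeg : 0 < (C τ⁻¹ * Q).natDegree := by rwa [natDegree_C_mul (inv_ne_zero hτ)]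
  have hlead : τ * Q.leadingCoeff = τ ^ 2 * (C τ⁻¹ * Q).leadingCoeff := by
    rw [leadingCoeff_mul, leadingCoeff_C]
    field_simp
  have hiff : τ * Q.leadingCoeff < 0 ↔ (C τ⁻¹ * Q).leadingCoeff < 0 := by
    rw [hlead, ← smul_eq_mul, smul_neg_iff_of_pos_left (sq_pos_of_ne_zero hτ)]
  have hfactor (a : ℝ) : Q + C (a * τ) = C τ * (C τ⁻¹ * Q + C a) := by
    rw [mul_add, ← mul_assoc, ← C_mul, ← C_mul, mul_inv_cancel₀ hτ, C_1, one_mul, mul_comm τ]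
  have hne : (C τ⁻¹ * Q).leadingCoeff ≠ 0 :=
    leadingCoeff_ne_zero.2 (ne_zero_of_natDegree_gt hdeg)
  simp only [hfactor, hiff]
  rcases hne.lt_or_gt with h | h
  · simp only [if_pos h]
    filter_upwards [eventually_hasSimplePosRoots_add_C_of_leadingCoeff_neg hdeg h] with a ha
      using ha.C_mul hτ
  · simp only [if_neg h.not_gt]
    filter_upwards [eventually_hasSimplePosRoots_add_C_of_leadingCoeff_pos hdeg h] with a ha
      using ha.C_mul hτ

end LargeConstantTerm

section CountRoots

lemma countRoots_iff {P : ℝ[X]} (hP : P.coeff 0 ≠ 0) {a b : ℕ} :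
    CountRoots P a b ↔ HasSimplePosRoots P a ∧ HasSimplePosRoots (P.comp (-X)) b := by
  have hcard : {x : ℝ | x < 0 ∧ P.eval x = 0}.ncard =
      {x : ℝ | 0 < x ∧ (P.comp (-X)).eval x = 0}.ncard := by
    refine Set.ncard_congr (fun x _ => -x) ?_ (fun x y _ _ h => neg_injective h) ?_
    · rintro x ⟨hx, hx0⟩
      exact ⟨neg_pos.2 hx, by rwa [eval_comp_neg_X, neg_neg]⟩
    · rintro y ⟨hy, hy0⟩
      exact ⟨-y, ⟨neg_neg_iff_pos.2 hy, by rwa [eval_comp_neg_X] at hy0⟩, neg_neg y⟩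
  have hderiv (x : ℝ) : (P.comp (-X)).derivative.eval x = -P.derivative.eval (-x) := by
    simp [derivative_comp]
  have hsimple : (∀ x, P.eval x = 0 → P.derivative.eval x ≠ 0) ↔
      (∀ x, 0 < x → P.eval x = 0 → P.derivative.eval x ≠ 0) ∧
      ∀ x, 0 < x → (P.comp (-X)).eval x = 0 → (P.comp (-X)).derivative.eval x ≠ 0 := by
    simp only [eval_comp_neg_X, hderiv, neg_ne_zero]
    refine ⟨fun h => ⟨fun x _ => h x, fun x _ => h (-x)⟩, fun h x hx0 => ?_⟩
    rcases lt_trichotomy x 0 with hx | rfl | hx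
    · simpa using h.2 (-x) (neg_pos.2 hx) (by rwa [neg_neg])
    · exact absurd (coeff_zero_eq_eval_zero P ▸ hx0) hP
    · exact h.1 x hx hx0
  rw [CountRoots, HasSimplePosRoots, HasSimplePosRoots, hcard, hsimple]
  tauto

lemma CountRoots.C_mul {P : ℝ[X]} {a b : ℕ} (hP : CountRoots P a b) {c : ℝ} (hc : c ≠ 0) :
    CountRoots (C c * P) a b := by
  simpa [CountRoots, hc] using hP

lemma CountRoots.eventually_add_C_mul_X_pow {R : ℝ[X]} {a b : ℕ} (hR : CountRoots R a b)
    (hR0 : R.coeff 0 ≠ 0) :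
    ∀ᶠ t in 𝓝[≠] 0, CountRoots (R + C t * X ^ (R.natDegree + 1))
      (a + if t * R.leadingCoeff < 0 then 1 else 0)
      (b + if 0 < t * R.leadingCoeff then 1 else 0) := by
  set n := R.natDegree with hn
  obtain ⟨hpos, hneg⟩ := (countRoots_iff hR0).1 hR
  have hneg' := hneg.eventually_add_C_mul_X_pow (by rwa [coeff_zero_comp_neg_X])
  have hsign : ((-1 : ℝ) ^ (n + 1)) ≠ 0 := pow_ne_zero _ (neg_ne_zero.2 one_ne_zero)
  filter_upwards [hpos.eventually_add_C_mul_X_pow hR0,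
    (tendsto_const_mul_nhdsNE_zero hsign).eventually hneg'] with t htpos htneg
  have hcomp : (R + C t * X ^ (n + 1)).comp (-X) =
      R.comp (-X) + C ((-1) ^ (n + 1) * t) * X ^ ((R.comp (-X)).natDegree + 1) := by
    rw [natDegree_comp_neg_X, add_comp, mul_comp, C_comp, X_pow_comp, neg_pow (X : ℝ[X])]
    simp only [map_mul, map_pow, map_neg, map_one, ← hn]
    ring
  have hlead : (-1) ^ (n + 1) * t * (R.comp (-X)).leadingCoeff = -(t * R.leadingCoeff) := by
    have hsq : ((-1 : ℝ) ^ n) * (-1) ^ n = 1 := by rw [← mul_pow]; simp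
    rw [comp_neg_X_leadingCoeff_eq, ← hn]
    linear_combination (-(t * R.leadingCoeff)) * hsq
  refine (countRoots_iff (by simpa using hR0)).2 ⟨htpos, ?_⟩
  simpa only [hlead, neg_lt_zero, ← hcomp] using htneg

lemma eventually_countRoots_add_C_mul {Q : ℝ[X]} (hQ : 0 < Q.natDegree) {τ : ℝ} (hτ : τ ≠ 0) :
    ∀ᶠ a in atTop, CountRoots (Q + C (a * τ)) (if τ * Q.leadingCoeff < 0 then 1 else 0)
      (if (-1) ^ Q.natDegree * (τ * Q.leadingCoeff) < 0 then 1 else 0) := by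
  have hQ' : 0 < (Q.comp (-X)).natDegree := by rwa [natDegree_comp_neg_X]
  filter_upwards [eventually_hasSimplePosRoots_add_C_mul hQ hτ,
    eventually_hasSimplePosRoots_add_C_mul hQ' hτ, eventually_ne_atTop (-Q.coeff 0 / τ)]
    with a hpos hneg ha
  have hcoeff : (Q + C (a * τ)).coeff 0 ≠ 0 := by
    rw [coeff_add, coeff_C_zero]
    exact fun h => ha ((eq_div_iff hτ).2 (by linarith))
  refine (countRoots_iff hcoeff).2 ⟨hpos, ?_⟩
  rwa [add_comp, C_comp, mul_left_comm, ← comp_neg_X_leadingCoeff_eq]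

end CountRoots

section Derivatives

lemma iterDeriv_eq_iterate_derivative (k : ℕ) (P : ℝ[X]) : iterDeriv k P = derivative^[k] P := by
  induction k with
  | zero => rfl
  | succ k ih => rw [iterDeriv, ih, Function.iterate_succ_apply']

lemma countRoots_iterate_derivative_natDegree {R : ℝ[X]} (hR : R ≠ 0) :
    CountRoots (derivative^[R.natDegree] R) 0 0 := by
  have hdeg : (derivative^[R.natDegree] R).natDegree = 0 := by
    rw [natDegree_iterate_derivative_eq, Nat.sub_self]
  have hne : (derivative^[R.natDegree] R).leadingCoeff ≠ 0 := by
    rw [leadingCoeff_iterate_derivative le_rfl, Nat.descFactorial_self]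
    exact mul_ne_zero (Nat.cast_ne_zero.2 (Nat.factorial_ne_zero _)) (leadingCoeff_ne_zero.2 hR)
  rw [leadingCoeff, hdeg] at hne
  rw [eq_C_of_natDegree_eq_zero hdeg]
  simp [CountRoots, hne]

lemma CountRoots.eventually_iterate_derivative_add {R : ℝ[X]} {k a b : ℕ}
    (h : CountRoots (derivative^[k] R) a b) (hk : k ≤ R.natDegree) (hRk : R.coeff k ≠ 0) :
    ∀ᶠ t in 𝓝[≠] 0, CountRoots (derivative^[k] (R + C t * X ^ (R.natDegree + 1)))
      (a + if t * R.leadingCoeff < 0 then 1 else 0)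
      (b + if 0 < t * R.leadingCoeff then 1 else 0) := by
  set n := R.natDegree
  have hcoeff : (derivative^[k] R).coeff 0 ≠ 0 := by
    rw [coeff_iterate_derivative, zero_add, nsmul_eq_mul, Nat.descFactorial_self]
    exact mul_ne_zero (Nat.cast_ne_zero.2 (Nat.factorial_ne_zero k)) hRk
  have hpos {j : ℕ} (hj : k ≤ j) : (0 : ℝ) < j.descFactorial k :=
    Nat.cast_pos.2 (Nat.descFactorial_pos.2 hj)
  have hpos' : (0 : ℝ) < (n + 1).descFactorial k := hpos (by omega)
  filter_upwards [(tendsto_const_mul_nhdsNE_zero hpos'.ne').eventually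
    (h.eventually_add_C_mul_X_pow hcoeff)] with t ht
  have hderiv : derivative^[k] (R + C t * X ^ (n + 1)) = derivative^[k] R +
      C ((n + 1).descFactorial k * t) * X ^ ((derivative^[k] R).natDegree + 1) := by
    rw [iterate_map_add, iterate_derivative_C_mul, iterate_derivative_X_pow_eq_natCast_mul,
      natDegree_iterate_derivative_eq, ← Nat.sub_add_comm hk, map_mul, map_natCast]
    ring
  have hlead : (n + 1).descFactorial k * t * (derivative^[k] R).leadingCoeff =
      ((n + 1).descFactorial k * n.descFactorial k : ℝ) • (t * R.leadingCoeff) := by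
    rw [leadingCoeff_iterate_derivative hk, smul_eq_mul]
    ring
  have hprod : (0 : ℝ) < (n + 1).descFactorial k * n.descFactorial k := mul_pos hpos' (hpos hk)
  simpa only [hderiv, hlead, smul_neg_iff_of_pos_left hprod, smul_pos_iff_of_pos_left hprod]
    using ht

end Derivatives

section SignPattern

lemma signChanges_succ (s : ℕ → ℤ) (n : ℕ) :
    signChanges s (n + 1) = signChanges s n + if s n * s (n + 1) < 0 then 1 else 0 := by
  rw [signChanges, signChanges, Finset.range_add_one, Finset.filter_insert]
  split_ifs <;> simp

lemma signPres_succ (s : ℕ → ℤ) (n : ℕ) :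
    signPres s (n + 1) = signPres s n + if 0 < s n * s (n + 1) then 1 else 0 := by
  rw [signPres, signPres, Finset.range_add_one, Finset.filter_insert]
  split_ifs <;> simp

lemma signChanges_le (s : ℕ → ℤ) (n : ℕ) : signChanges s n ≤ n :=
  (Finset.card_filter_le _ _).trans_eq (Finset.card_range n)

lemma signPres_le (s : ℕ → ℤ) (n : ℕ) : signPres s n ≤ n :=
  (Finset.card_filter_le _ _).trans_eq (Finset.card_range n)

lemma monotone_signChanges (s : ℕ → ℤ) : Monotone (signChanges s) :=
  monotone_nat_of_le_succ fun n => by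
    rw [signChanges_succ]
    exact Nat.le_add_right _ _

lemma monotone_signPres (s : ℕ → ℤ) : Monotone (signPres s) :=
  monotone_nat_of_le_succ fun n => by
    rw [signPres_succ]
    exact Nat.le_add_right _ _

lemma IsSignPattern.ne_zero {d : ℕ} {s : ℕ → ℤ} (hs : IsSignPattern d s) {i : ℕ} (hi : i ≤ d) :
    s i ≠ 0 := by
  rcases hs.2 i hi with h | h <;> simp [h]

lemma IsSignPattern.signChanges_add_signPres {d m : ℕ} {s : ℕ → ℤ} (hs : IsSignPattern d s)
    (hm : m ≤ d) : signChanges s m + signPres s m = m := by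
  induction m with
  | zero => rfl
  | succ m ih =>
    rw [signChanges_succ, signPres_succ]
    have := ih (by omega)
    rcases (mul_ne_zero (hs.ne_zero (i := m) (by omega)) (hs.ne_zero hm)).lt_or_gt with h | h
    · rw [if_pos h, if_neg h.not_gt]
      omega
    · rw [if_neg h.not_gt, if_pos h]
      omega

lemma IsSignPattern.eq_neg_one_pow {d m : ℕ} {s : ℕ → ℤ} (hs : IsSignPattern d s) (hm : m ≤ d) :
    s m = (-1) ^ signChanges s m := by
  induction m with
  | zero => simpa [signChanges] using hs.1
  | succ m ih =>
    rw [signChanges_succ, pow_add, ← ih (by omega)]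
    rcases hs.2 m (by omega) with h | h <;> rcases hs.2 (m + 1) hm with h' | h' <;>
      simp [h, h']

lemma IsSignPattern.mul_eq_neg_one_pow {d m : ℕ} {s : ℕ → ℤ} (hs : IsSignPattern d s)
    (hm : m ≤ d) : s d * s m = (-1) ^ (signChanges s d - signChanges s m) := by
  have hle : signChanges s m ≤ signChanges s d := monotone_signChanges s hm
  rw [hs.eq_neg_one_pow le_rfl, hs.eq_neg_one_pow hm]
  nth_rw 1 [← Nat.sub_add_cancel hle]
  rw [pow_add, mul_assoc, ← mul_pow, neg_one_mul, neg_neg, one_pow, mul_one]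

lemma IsSignPattern.neg_one_pow_mul_mul_eq {d m : ℕ} {s : ℕ → ℤ} (hs : IsSignPattern d s)
    (hm : m ≤ d) : (-1) ^ (d - m) * (s d * s m) = (-1) ^ (signPres s d - signPres s m) := by
  have hle : signChanges s m ≤ signChanges s d := monotone_signChanges s hm
  have hle' : signPres s m ≤ signPres s d := monotone_signPres s hm
  have hd := hs.signChanges_add_signPres le_rfl
  have hm' := hs.signChanges_add_signPres hm
  rw [hs.mul_eq_neg_one_pow hm, show d - m = (signPres s d - signPres s m) +
    (signChanges s d - signChanges s m) by omega, pow_add, mul_assoc, ← mul_pow, neg_one_mul,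
    neg_neg, one_pow, mul_one]

lemma IsSAP.eq_signChanges_signPres {d : ℕ} {s : ℕ → ℤ} {pn : ℕ → ℕ × ℕ}
    (hs : IsSignPattern d s) (hpn : IsSAP d s pn) (hsum : (pn 0).1 + (pn 0).2 = d) {k : ℕ}
    (hk : k < d) : pn k = (signChanges s (d - k), signPres s (d - k)) := by
  have hlower : d ≤ (pn k).1 + (pn k).2 + k := by
    induction k with
    | zero => omega
    | succ k ih =>
      have := ih (by omega)
      have := (hpn.2 k hk).2.2.1
      omega
  obtain ⟨hpos, -, hneg, -⟩ := hpn.1 k hk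
  have := hs.signChanges_add_signPres (Nat.sub_le d k)
  ext <;> dsimp only <;> omega

end SignPattern

section RealizableTail

/-- A realization of the low-order part of a couple `(s, pn)`: a polynomial of degree `d - m`
whose coefficients have the signs `s m, …, s d`, and whose `k`-th derivative, counting also the
sign changes and preservations among `s 0, …, s m`, has the numbers of roots prescribed by
`pn k`. The missing roots are to be created by adding the leading terms of signs
`s (m - 1), …, s 0`. -/
def RealizableTail (d : ℕ) (s : ℕ → ℤ) (pn : ℕ → ℕ × ℕ) (m : ℕ) : Prop :=
  ∃ R : ℝ[X], R.natDegree = d - m ∧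
    (∀ i, m ≤ i → i ≤ d → 0 < (s i : ℝ) * R.coeff (d - i)) ∧
    ∀ k < d - m, ∃ a b, CountRoots (derivative^[k] R) a b ∧
      pn k = (a + signChanges s m, b + signPres s m)

lemma mul_mul_mul_pos_of_mul_pos {K : Type*} [CommRing K] [LinearOrder K]
    [IsStrictOrderedRing K] {σ l τ : K} (h : 0 < σ * l) (hτ : τ ≠ 0) : 0 < τ * l * (τ * σ) := by
  rw [show τ * l * (τ * σ) = τ ^ 2 * (σ * l) by ring]
  exact mul_pos (sq_pos_of_ne_zero hτ) h

lemma realizableTail_self {d : ℕ} {s : ℕ → ℤ} (hs : s d ≠ 0) (pn : ℕ → ℕ × ℕ) :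
    RealizableTail d s pn d := by
  refine ⟨C (s d : ℝ), by rw [natDegree_C, Nat.sub_self], fun i hdi hid => ?_, by simp⟩
  obtain rfl := le_antisymm hid hdi
  rw [Nat.sub_self, coeff_C_zero, ← sq]
  exact sq_pos_of_ne_zero (Int.cast_ne_zero.2 hs)

lemma exists_countRoots_iterate_derivative_add {R : ℝ[X]} {a b : ℕ → ℕ}
    (hcoeff : ∀ k ≤ R.natDegree, R.coeff k ≠ 0)
    (hcount : ∀ k ≤ R.natDegree, CountRoots (derivative^[k] R) (a k) (b k)) {τ : ℝ} (hτ : τ ≠ 0) :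
    ∃ ε > 0, ∀ k ≤ R.natDegree,
      CountRoots (derivative^[k] (R + C (τ * ε) * X ^ (R.natDegree + 1)))
        (a k + if τ * R.leadingCoeff < 0 then 1 else 0)
        (b k + if 0 < τ * R.leadingCoeff then 1 else 0) := by
  have hsmall : Tendsto (fun ε => τ * ε) (𝓝[>] 0) (𝓝[≠] 0) :=
    (tendsto_const_mul_nhdsNE_zero hτ).mono_left (nhdsGT_le_nhdsNE 0)
  have hall := (eventually_all_finite (Set.finite_Iic R.natDegree)).2 fun k hk =>
    (hcount k hk).eventually_iterate_derivative_add hk (hcoeff k hk)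
  obtain ⟨ε, hε, hpos⟩ := ((hsmall.eventually hall).and self_mem_nhdsWithin).exists
  refine ⟨ε, hpos, fun k hk => ?_⟩
  have hmul : τ * ε * R.leadingCoeff = ε • (τ * R.leadingCoeff) := by
    rw [smul_eq_mul]
    ring
  simpa only [hmul, smul_neg_iff_of_pos_left hpos, smul_pos_iff_of_pos_left hpos]
    using hε k hk

lemma RealizableTail.prepend {d m : ℕ} {s : ℕ → ℤ} {pn : ℕ → ℕ × ℕ}
    (h : RealizableTail d s pn (m + 1)) (hmd : m < d) (hsm : s m ≠ 0)
    (hpn : pn (d - (m + 1)) = (signChanges s (m + 1), signPres s (m + 1))) :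
    RealizableTail d s pn m := by
  obtain ⟨R, hdeg, hsign, hcount⟩ := h
  have hτ : (s m : ℝ) ≠ 0 := Int.cast_ne_zero.2 hsm
  have hdeg' : R.natDegree + 1 = d - m := by omega
  have hlead : 0 < (s (m + 1) : ℝ) * R.leadingCoeff := by
    rw [leadingCoeff, hdeg]
    exact hsign (m + 1) le_rfl hmd
  have hcoeff (k : ℕ) (hk : k ≤ R.natDegree) : R.coeff k ≠ 0 := by
    have := right_ne_zero_of_mul (hsign (d - k) (by omega) (by omega)).ne'
    rwa [show d - (d - k) = k by omega] at this
  have hcount' : ∀ k ≤ R.natDegree, ∃ a b, CountRoots (derivative^[k] R) a b ∧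
      pn k = (a + signChanges s (m + 1), b + signPres s (m + 1)) := by
    intro k hk
    rcases hk.lt_or_eq with hlt | rfl
    · exact hcount k (hdeg ▸ hlt)
    · have hR : R ≠ 0 := leadingCoeff_ne_zero.1 (right_ne_zero_of_mul hlead.ne')
      exact ⟨0, 0, countRoots_iterate_derivative_natDegree hR, by simp only [hdeg, hpn, zero_add]⟩
  choose! a b hab hpnk using hcount'
  obtain ⟨ε, hε, hroots⟩ := exists_countRoots_iterate_derivative_add hcoeff hab hτ
  have hsgn := mul_mul_mul_pos_of_mul_pos hlead hτ
  simp only [neg_iff_neg_of_mul_pos hsgn, pos_iff_pos_of_mul_pos hsgn, ← Int.cast_mul,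
    Int.cast_lt_zero, Int.cast_pos] at hroots
  refine ⟨_, (natDegree_add_C_mul_X_pow R (mul_ne_zero hτ hε.ne')).trans hdeg',
    fun i hmi hid => ?_, fun k hk => ⟨_, _, hroots k (by omega), ?_⟩⟩
  · rw [coeff_add, coeff_C_mul_X_pow]
    rcases hmi.eq_or_lt with rfl | hlt
    · rw [if_pos hdeg'.symm, coeff_eq_zero_of_natDegree_lt (by omega), zero_add, ← mul_assoc]
      exact mul_pos (mul_self_pos.2 hτ) hε
    · rw [if_neg (by omega), add_zero]
      exact hsign i hlt hid
  · rw [hpnk k (by omega), signChanges_succ, signPres_succ, add_assoc, add_assoc,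
      add_comm (ite _ _ _), add_comm (ite _ _ _)]

lemma RealizableTail.prepend_of_le {d m n : ℕ} {s : ℕ → ℤ} {pn : ℕ → ℕ × ℕ}
    (h : RealizableTail d s pn n) (hmn : m ≤ n) (hnd : n ≤ d) (hs : ∀ i < n, s i ≠ 0)
    (hpn : ∀ k, d - n ≤ k → k < d - m → pn k = (signChanges s (d - k), signPres s (d - k))) :
    RealizableTail d s pn m := by
  induction hmn using Nat.decreasingInduction with
  | self => exact h
  | of_succ m hmn ih =>
    refine (ih fun k hk hk' => hpn k hk (by omega)).prepend (by omega) (hs m hmn) ?_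
    rw [hpn _ (by omega) (by omega), show d - (d - (m + 1)) = m + 1 by omega]

lemma ite_neg_one_pow_neg {K : Type*} [Ring K] [LinearOrder K] [IsStrictOrderedRing K] (n : ℕ) :
    (if (-1 : K) ^ n < 0 then 1 else 0) = n % 2 := by
  rcases n.even_or_odd with h | h
  · simp [h.neg_one_pow, Nat.even_iff.1 h]
  · simp [h.neg_one_pow, Nat.odd_iff.1 h]

lemma IsSignPattern.eventually_countRoots_add_const {d m : ℕ} {s : ℕ → ℤ}
    (hs : IsSignPattern d s) (hmd : m < d) {R : ℝ[X]} (hdeg : R.natDegree = d - m)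
    (hlead : 0 < (s m : ℝ) * R.leadingCoeff) :
    ∀ᶠ a : ℝ in atTop, CountRoots (R + C (a * s d)) ((signChanges s d - signChanges s m) % 2)
      ((signPres s d - signPres s m) % 2) := by
  have hτ : (s d : ℝ) ≠ 0 := Int.cast_ne_zero.2 (hs.ne_zero le_rfl)
  have hpos := mul_mul_mul_pos_of_mul_pos hlead hτ
  have hneg := mul_mul_mul_pos_of_mul_pos hlead
    (mul_ne_zero (pow_ne_zero (d - m) (neg_ne_zero.2 one_ne_zero)) hτ)
  have hchanges : (s d : ℝ) * s m = (-1) ^ (signChanges s d - signChanges s m) := by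
    exact_mod_cast hs.mul_eq_neg_one_pow hmd.le
  have hpres : (-1 : ℝ) ^ (d - m) * (s d * s m) = (-1) ^ (signPres s d - signPres s m) := by
    exact_mod_cast hs.neg_one_pow_mul_mul_eq hmd.le
  have hroots := eventually_countRoots_add_C_mul (Q := R) (by omega) hτ
  rw [hdeg, ← mul_assoc] at hroots
  simp only [neg_iff_neg_of_mul_pos hpos, neg_iff_neg_of_mul_pos hneg] at hroots
  rwa [mul_assoc, hpres, hchanges, ite_neg_one_pow_neg, ite_neg_one_pow_neg] at hroots

lemma RealizableTail.replace_zero {d m : ℕ} {s : ℕ → ℤ} {pn pn' : ℕ → ℕ × ℕ}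
    (hs : IsSignPattern d s) (h : RealizableTail d s pn m) (hmd : m < d)
    (hzero : pn' 0 = ((signChanges s d - signChanges s m) % 2 + signChanges s m,
      (signPres s d - signPres s m) % 2 + signPres s m))
    (hk : ∀ k, 1 ≤ k → k < d - m → pn' k = pn k) : RealizableTail d s pn' m := by
  obtain ⟨R, hdeg, hsign, hcount⟩ := h
  have hτ : (s d : ℝ) ≠ 0 := Int.cast_ne_zero.2 (hs.ne_zero le_rfl)
  have hlead : 0 < (s m : ℝ) * R.leadingCoeff := by
    rw [leadingCoeff, hdeg]
    exact hsign m le_rfl hmd.le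
  have hroots := hs.eventually_countRoots_add_const hmd hdeg hlead
  obtain ⟨a, hroots, ha⟩ := (hroots.and (eventually_gt_atTop 0)).exists
  refine ⟨R + C (a * s d), by rw [natDegree_add_C, hdeg], fun i hmi hid => ?_, fun k hkd => ?_⟩
  · rw [coeff_add, coeff_C]
    rcases hid.lt_or_eq with hlt | rfl
    · rw [if_neg (by omega), add_zero]
      exact hsign i hmi hid
    · rw [if_pos (Nat.sub_self i), mul_add, mul_left_comm]
      exact add_pos (hsign i hmi le_rfl) (mul_pos ha (mul_self_pos.2 hτ))
  · rcases k.eq_zero_or_pos with rfl | hk0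
    · exact ⟨_, _, hroots, hzero⟩
    · rw [iterate_map_add, iterate_derivative_C hk0, add_zero, hk k hk0 hkd]
      exact hcount k hkd

lemma RealizableTail.realizable {d : ℕ} {s : ℕ → ℤ} {pn : ℕ → ℕ × ℕ}
    (h : RealizableTail d s pn 0) (hs0 : s 0 = 1) : Realizable d s pn := by
  obtain ⟨R, hdeg, hsign, hcount⟩ := h
  have hlead : 0 < R.leadingCoeff := by
    rw [leadingCoeff, hdeg]
    simpa only [hs0, Int.cast_one, one_mul] using hsign 0 le_rfl d.zero_le
  have hinv : 0 < R.leadingCoeff⁻¹ := inv_pos.2 hlead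
  have hsign' : ∀ i ≤ d, 0 < (s i : ℝ) * (C R.leadingCoeff⁻¹ * R).coeff (d - i) := by
    intro i hi
    rw [coeff_C_mul, mul_left_comm]
    exact mul_pos hinv (hsign i i.zero_le hi)
  refine ⟨C R.leadingCoeff⁻¹ * R, monic_C_mul_of_mul_leadingCoeff_eq_one
    (inv_mul_cancel₀ hlead.ne'), by rw [natDegree_C_mul hinv.ne', hdeg, Nat.sub_zero],
    fun j hj => ?_, hsign', fun k hk => ?_⟩
  · rw [← Nat.sub_sub_self hj]
    exact right_ne_zero_of_mul (hsign' (d - j) (Nat.sub_le d j)).ne'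
  · obtain ⟨a, b, hab, hpn⟩ := hcount k hk
    rw [iterDeriv_eq_iterate_derivative, iterate_derivative_C_mul, hpn]
    exact hab.C_mul hinv.ne'

end RealizableTail

theorem stmt12_general {d : ℕ} (hd : 0 < d) {s : ℕ → ℤ} (hs : IsSignPattern d s) {u v : ℕ}
    (hu : Even u) (hv : Even v)
    (hc : u + signChanges s (d - (u + v + 1)) ≤ signChanges s d)
    (hp : v + signPres s (d - (u + v + 1)) ≤ signPres s d) {pn pn' : ℕ → ℕ × ℕ}
    (hpn : IsSAP d s pn) (hsum : (pn 0).1 + (pn 0).2 = d)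
    (hzero : pn' 0 = (signChanges s d - u, signPres s d - v))
    (hk : ∀ k, 1 ≤ k → k < d → pn' k = pn k) : Realizable d s pn' := by
  set m := d - (u + v + 1)
  have hmd : m < d := by omega
  have hne (i : ℕ) (hi : i < d) : s i ≠ 0 := hs.ne_zero hi.le
  have hcounts (k : ℕ) (hkd : k < d) := hpn.eq_signChanges_signPres hs hsum hkd
  have htail : RealizableTail d s pn m :=
    (realizableTail_self (hs.ne_zero le_rfl) pn).prepend_of_le hmd.le le_rfl hne
      fun k _ hkm => hcounts k (by omega)
  have htail' : RealizableTail d s pn' m := by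
    refine htail.replace_zero hs hmd ?_ fun k hk1 hkm => hk k hk1 (by omega)
    have hsumd := hs.signChanges_add_signPres le_rfl
    have hsumm := hs.signChanges_add_signPres hmd.le
    rw [Nat.even_iff] at hu hv
    rw [hzero]
    ext <;> dsimp only <;> omega
  refine (htail'.prepend_of_le m.zero_le hmd.le (fun i hi => hne i (by omega))
    fun k hkm hkd => ?_).realizable hs.1
  rw [hk k (by omega) hkd, hcounts k hkd]

/-- If the Descartes pair of `σ` is `(d-1, 1)` (resp. `(1, d-1)`) and `pn` is the
unique SAP for `σ` with `pos_0 + neg_0 = d`, then for every `ν` with `1 ≤ ν` and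
`2ν ≤ d-1`, every SAP for `σ` obtained from `pn` by replacing its first pair with
`(d-1-2ν, 1)` (resp. `(1, d-1-2ν)`) is realizable with the sign pattern `σ`. -/
theorem stmt12 (d : ℕ) (hd : 1 ≤ d) (s : ℕ → ℤ) (hs : IsSignPattern d s)
    (pn : ℕ → ℕ × ℕ) (hpn : IsSAP d s pn) (hsum : (pn 0).1 + (pn 0).2 = d) :
    ((signChanges s d = d - 1 ∧ signPres s d = 1) →
      ∀ ν : ℕ, 1 ≤ ν → 2 * ν ≤ d - 1 →
        ∀ pn' : ℕ → ℕ × ℕ, pn' 0 = (d - 1 - 2 * ν, 1) →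
          (∀ k, 1 ≤ k → k < d → pn' k = pn k) →
          IsSAP d s pn' → Realizable d s pn') ∧
    ((signChanges s d = 1 ∧ signPres s d = d - 1) →
      ∀ ν : ℕ, 1 ≤ ν → 2 * ν ≤ d - 1 →
        ∀ pn' : ℕ → ℕ × ℕ, pn' 0 = (1, d - 1 - 2 * ν) →
          (∀ k, 1 ≤ k → k < d → pn' k = pn k) →
          IsSAP d s pn' → Realizable d s pn') := by
  constructor <;> rintro ⟨hc, hp⟩ ν - hν pn' h0 hk -
  · have hle := signChanges_le s (d - (2 * ν + 0 + 1))
    have hmono := monotone_signPres s (Nat.sub_le d (2 * ν + 0 + 1))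
    exact stmt12_general hd hs (even_two_mul ν) Even.zero (by omega) (by omega) hpn hsum
      (by rw [h0, hc, hp, Nat.sub_zero]) hk
  · have hle := signPres_le s (d - (0 + 2 * ν + 1))
    have hmono := monotone_signChanges s (Nat.sub_le d (0 + 2 * ν + 1))
    exact stmt12_general hd hs Even.zero (even_two_mul ν) (by omega) (by omega) hpn hsum
      (by rw [h0, hc, hp, Nat.sub_zero]) hk
end

section
/- Let h_{d,m} denote the number of sequences of admissible pairs for the all-pluses sign pattern of length d+1 whose first pair is (pos_0, neg_0) = (0, m). Then for all d ≥ 1: h_{d,d} = 1 and h_{d,m} = 0 for every m > d. Moreover, for all d ≥ 4: h_{d,m} = h_{d,m+2} + h_{d−1,m−1} for every m ≥ 1, and if d is even then h_{d,0} = h_{d,2}. -/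
open Polynomial

/-- The all-pluses sign pattern. -/
def allPlus : ℕ → ℤ := fun _ => 1

/-- Extend a finite sequence of pairs to `ℕ` (by `(0,0)` beyond `d`). -/
def extendPN (d : ℕ) (pn : Fin d → ℕ × ℕ) : ℕ → ℕ × ℕ :=
  fun k => if hk : k < d then pn ⟨k, hk⟩ else (0, 0)

/-- `A d` is the number of SAPs for the all-pluses sign pattern of length `d+1`. -/
noncomputable def A (d : ℕ) : ℕ :=
  {pn : Fin d → ℕ × ℕ | IsSAP d allPlus (extendPN d pn)}.ncard

/-- `hNum d m` is the number of SAPs for the all-pluses sign pattern of length `d+1`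
whose first pair is `(0, m)`. -/
noncomputable def hNum (d m : ℕ) : ℕ :=
  {pn : Fin d → ℕ × ℕ |
    IsSAP d allPlus (extendPN d pn) ∧ extendPN d pn 0 = (0, m)}.ncard

/-!
For the all-pluses pattern every `pos_k` vanishes, so a SAP is a sequence of numbers `neg_k` with
`neg_k ≤ d - k`, `neg_k ≡ d - k` modulo `2` and `neg_k ≤ neg_{k+1} + 1`. Deleting the first pair
`(0, m)` leaves a SAP for the pattern of length `d` whose first number `n` satisfies `n ≥ m - 1`.
Either `n = m - 1`, which `h_{d-1,m-1}` counts, or parity forces `n ≥ m + 1`, which is exactly what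
may follow a first pair `(0, m + 2)`. For `m = 0` and even `d` the number `n` is odd, so `n ≥ 1`
holds automatically and the first pairs `(0, 0)` and `(0, 2)` have the same continuations.
-/

lemma signChanges_allPlus (n : ℕ) : signChanges allPlus n = 0 := by
  simp [signChanges, allPlus]

lemma signPres_allPlus (n : ℕ) : signPres allPlus n = n := by
  simp [signPres, allPlus]

lemma isSAP_allPlus_iff (d : ℕ) (f : ℕ → ℕ × ℕ) :
    IsSAP d allPlus f ↔
      (∀ k < d, (f k).1 = 0 ∧ (f k).2 ≤ d - k ∧ (f k).2 % 2 = (d - k) % 2) ∧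
        ∀ k, k + 1 < d → (f k).2 ≤ (f (k + 1)).2 + 1 := by
  simp only [IsSAP, signChanges_allPlus, signPres_allPlus, Int.even_iff]
  constructor
  · rintro ⟨hadm, hrolle⟩
    exact ⟨fun k hk => by have := hadm k hk; omega, fun k hk => (hrolle k hk).2.1⟩
  · rintro ⟨hadm, hrolle⟩
    refine ⟨fun k hk => ?_, fun k hk => ?_⟩
    · obtain ⟨hpos, hle, hpar⟩ := hadm k hk
      exact ⟨by omega, by omega, hle, by omega, by simp [allPlus, hpos]⟩
    · have := hadm k (by omega)
      have := hadm (k + 1) hk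
      have := hrolle k hk
      omega

lemma isSAP_allPlus_add_two_iff (d : ℕ) (f : ℕ → ℕ × ℕ) :
    IsSAP (d + 2) allPlus f ↔
      ((f 0).1 = 0 ∧ (f 0).2 ≤ d + 2 ∧ (f 0).2 % 2 = d % 2) ∧ (f 0).2 ≤ (f 1).2 + 1 ∧
        IsSAP (d + 1) allPlus fun k => f (k + 1) := by
  simp only [isSAP_allPlus_iff, Nat.add_lt_add_iff_right, Nat.forall_lt_succ_left (n := d + 1),
    Nat.forall_lt_succ_left (n := d), Nat.add_sub_add_right, Nat.sub_zero, Nat.add_mod_right,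
    zero_add]
  tauto

lemma extendPN_succ_succ (d : ℕ) (pn : Fin (d + 1) → ℕ × ℕ) (k : ℕ) :
    extendPN (d + 1) pn (k + 1) = extendPN d (Fin.tail pn) k := by
  simp [extendPN, Fin.tail]

/-- The set of SAPs for the all-pluses sign pattern of length `d + 1`, as finite sequences. -/
def allPlusSAPs (d : ℕ) : Set (Fin d → ℕ × ℕ) :=
  {pn | IsSAP d allPlus (extendPN d pn)}

/-- The SAPs for the all-pluses sign pattern of length `d + 2` with first pair `(0, m)`, which
`hNum (d + 1) m` counts. The index is shifted so that the first pair exists. -/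
def sapsFrom (d m : ℕ) : Set (Fin (d + 1) → ℕ × ℕ) :=
  {pn | pn ∈ allPlusSAPs (d + 1) ∧ pn 0 = (0, m)}

/-- The SAPs for the all-pluses sign pattern of length `d + 2` to which the Rolle-type inequalities
allow a pair `(0, m)` to be prepended. -/
def sapTails (d m : ℕ) : Set (Fin (d + 1) → ℕ × ℕ) :=
  {pn | pn ∈ allPlusSAPs (d + 1) ∧ m ≤ (pn 0).2 + 1}

lemma hNum_succ (d m : ℕ) : hNum (d + 1) m = (sapsFrom d m).ncard := rfl

lemma mem_allPlusSAPs_add_two_iff (d : ℕ) (pn : Fin (d + 2) → ℕ × ℕ) :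
    pn ∈ allPlusSAPs (d + 2) ↔
      ((pn 0).1 = 0 ∧ (pn 0).2 ≤ d + 2 ∧ (pn 0).2 % 2 = d % 2) ∧
        (pn 0).2 ≤ (Fin.tail pn 0).2 + 1 ∧ Fin.tail pn ∈ allPlusSAPs (d + 1) := by
  have key := isSAP_allPlus_add_two_iff d (extendPN (d + 2) pn)
  simp only [extendPN_succ_succ (d + 1)] at key
  exact key

lemma head_of_mem_allPlusSAPs {d : ℕ} {pn : Fin (d + 1) → ℕ × ℕ} (h : pn ∈ allPlusSAPs (d + 1)) :
    (pn 0).1 = 0 ∧ (pn 0).2 ≤ d + 1 ∧ (pn 0).2 % 2 = (d + 1) % 2 :=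
  ((isSAP_allPlus_iff _ _).1 h).1 0 d.succ_pos

lemma finite_allPlusSAPs (d : ℕ) : (allPlusSAPs d).Finite := by
  refine (Set.finite_Iic fun _ : Fin d => ((0, d) : ℕ × ℕ)).subset fun pn h i => ?_
  obtain ⟨hpos, hneg, -⟩ := ((isSAP_allPlus_iff _ _).1 h).1 i i.isLt
  simp only [extendPN, i.isLt, dite_true] at hpos hneg
  exact ⟨hpos.le, hneg.trans (Nat.sub_le _ _)⟩

lemma le_and_mod_eq_of_hNum_succ_ne_zero {d m : ℕ} (h : hNum (d + 1) m ≠ 0) :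
    m ≤ d + 1 ∧ m % 2 = (d + 1) % 2 := by
  obtain ⟨pn, hsap, hfirst⟩ : (sapsFrom d m).Nonempty := Set.nonempty_of_ncard_ne_zero h
  have hhead := head_of_mem_allPlusSAPs hsap
  rw [hfirst] at hhead
  exact hhead.2

lemma hNum_succ_eq_zero_of_lt {d m : ℕ} (h : d + 1 < m) : hNum (d + 1) m = 0 :=
  of_not_not fun hne => h.not_ge (le_and_mod_eq_of_hNum_succ_ne_zero hne).1

lemma hNum_succ_eq_zero_of_mod_ne {d m : ℕ} (h : m % 2 ≠ (d + 1) % 2) : hNum (d + 1) m = 0 :=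
  of_not_not fun hne => h (le_and_mod_eq_of_hNum_succ_ne_zero hne).2

lemma sapsFrom_succ_eq_image_cons {d m : ℕ} (h : m % 2 = d % 2) :
    sapsFrom (d + 1) m = (fun q => Fin.cons (0, m) q) '' sapTails d m := by
  ext pn
  constructor
  · rintro ⟨hsap, hfirst⟩
    obtain ⟨-, hrolle, htail⟩ := (mem_allPlusSAPs_add_two_iff d pn).1 hsap
    rw [hfirst] at hrolle
    exact ⟨Fin.tail pn, ⟨htail, hrolle⟩, by rw [← hfirst]; exact Fin.cons_self_tail pn⟩
  · rintro ⟨q, ⟨hq, hm⟩, rfl⟩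
    have hle : m ≤ d + 2 := by
      have := head_of_mem_allPlusSAPs hq
      omega
    exact ⟨(mem_allPlusSAPs_add_two_iff d _).2 ⟨⟨rfl, hle, h⟩, hm, hq⟩, rfl⟩

lemma hNum_add_two {d m : ℕ} (h : m % 2 = d % 2) : hNum (d + 2) m = (sapTails d m).ncard := by
  rw [hNum_succ, sapsFrom_succ_eq_image_cons h]
  exact Set.ncard_image_of_injective _ (Fin.cons_right_injective (α := fun _ => ℕ × ℕ) _)

lemma sapTails_succ {d m : ℕ} (h : (m + 1) % 2 = d % 2) :
    sapTails d (m + 1) = sapTails d (m + 3) ∪ sapsFrom d m := by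
  ext pn
  simp only [sapTails, sapsFrom, Set.mem_union, Set.mem_ofPred_eq, ← and_or_left]
  refine and_congr_right fun hsap => ?_
  have := head_of_mem_allPlusSAPs hsap
  rw [Prod.ext_iff]
  omega

lemma disjoint_sapTails_sapsFrom (d m : ℕ) : Disjoint (sapTails d (m + 3)) (sapsFrom d m) := by
  rw [Set.disjoint_left]
  rintro pn ⟨-, hle⟩ ⟨-, hfirst⟩
  simp only [hfirst] at hle
  omega

lemma sapTails_zero {d : ℕ} (h : d % 2 = 0) : sapTails d 0 = sapTails d 2 := by
  ext pn
  refine and_congr_right fun hsap => ?_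
  have := head_of_mem_allPlusSAPs hsap
  omega

lemma hNum_add_two_succ (d m : ℕ) :
    hNum (d + 2) (m + 1) = hNum (d + 2) (m + 3) + hNum (d + 1) m := by
  by_cases h : (m + 1) % 2 = d % 2
  · rw [hNum_add_two h, hNum_add_two (by omega), hNum_succ, sapTails_succ h]
    exact Set.ncard_union_eq (disjoint_sapTails_sapsFrom d m)
      ((finite_allPlusSAPs _).subset fun _ hpn => hpn.1)
      ((finite_allPlusSAPs _).subset fun _ hpn => hpn.1)
  · rw [hNum_succ_eq_zero_of_mod_ne (by omega), hNum_succ_eq_zero_of_mod_ne (by omega),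
      hNum_succ_eq_zero_of_mod_ne (by omega)]

lemma hNum_add_two_zero (d : ℕ) : hNum (d + 2) 0 = hNum (d + 2) 2 := by
  by_cases h : d % 2 = 0
  · rw [hNum_add_two (by omega), hNum_add_two (by omega), sapTails_zero h]
  · rw [hNum_succ_eq_zero_of_mod_ne (by omega), hNum_succ_eq_zero_of_mod_ne (by omega)]

lemma hNum_one_one : hNum 1 1 = 1 := by
  rw [hNum_succ, Set.ncard_eq_one]
  refine ⟨fun _ => (0, 1), Set.eq_singleton_iff_unique_mem.2 ⟨⟨?_, rfl⟩, ?_⟩⟩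
  · exact (isSAP_allPlus_iff _ _).2 (by simp [extendPN])
  · rintro pn ⟨-, hfirst⟩
    funext i
    rwa [Fin.fin_one_eq_zero i]

lemma hNum_succ_self (d : ℕ) : hNum (d + 1) (d + 1) = 1 := by
  induction d with
  | zero => exact hNum_one_one
  | succ d ih => rw [hNum_add_two_succ, ih, hNum_succ_eq_zero_of_lt (by omega)]

theorem stmt14_general :
    (∀ d : ℕ, 1 ≤ d → hNum d d = 1 ∧ ∀ m : ℕ, d < m → hNum d m = 0) ∧
    (∀ d : ℕ, 2 ≤ d →
      (∀ m : ℕ, 1 ≤ m → hNum d m = hNum d (m + 2) + hNum (d - 1) (m - 1)) ∧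
      hNum d 0 = hNum d 2) := by
  refine ⟨fun d hd => ?_, fun d hd => ?_⟩
  · obtain ⟨d, rfl⟩ := Nat.exists_eq_add_of_le' hd
    exact ⟨hNum_succ_self d, fun m hm => hNum_succ_eq_zero_of_lt hm⟩
  · obtain ⟨d, rfl⟩ := Nat.exists_eq_add_of_le' hd
    refine ⟨fun m hm => ?_, hNum_add_two_zero d⟩
    obtain ⟨m, rfl⟩ := Nat.exists_eq_add_of_le' hm
    exact hNum_add_two_succ d m

/-- Basic values and the recurrence for the numbers `hNum d m` of SAPs for the
all-pluses sign pattern of length `d+1` whose first pair is `(0, m)`. -/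
theorem stmt14 :
    (∀ d : ℕ, 1 ≤ d → hNum d d = 1 ∧ ∀ m : ℕ, d < m → hNum d m = 0) ∧
    (∀ d : ℕ, 4 ≤ d →
      (∀ m : ℕ, 1 ≤ m → hNum d m = hNum d (m + 2) + hNum (d - 1) (m - 1)) ∧
      (Even d → hNum d 0 = hNum d 2)) :=
  ⟨stmt14_general.1, fun d hd =>
    (stmt14_general.2 d (by omega)).imp_right fun hzero _ => hzero⟩
end

section
/- Let A(d) denote the number of sequences of admissible pairs for the all-pluses sign pattern of length d+1, and let h_{d,m} denote the number of such SAPs whose first pair is (pos_0, neg_0) = (0, m). Then for every even integer d ≥ 4 one has h_{d,0} = h_{d,2} = A(d−1), and for every odd integer d ≥ 5 one has h_{d,1} = A(d−1) and 2·h_{d,3} > A(d−1). -/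
open Polynomial

/-!
Deleting the first pair `p` of a SAP of degree `d` gives a SAP of degree `d - 1` whose first pair
may follow `p`, and this is a bijection. For the all-pluses pattern every `pos` vanishes and
`neg` has the parity of the degree, so `p = (0, m)` only requires the next pair `(0, n)` to
satisfy `m ≤ n + 1`. This always holds when `m ≤ 1`, and by parity also when `m = 2`; for
`m = 3` it excludes exactly `n = 0`. So for odd `d` we get `A (d - 1) = h_{d-1,0} + h_{d,3}`, and
`h_{d-1,0} = h_{d-1,2} < h_{d,3}`, because `n = 2` is allowed after `m = 3` but so is
`n = d - 1 > 2`.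
-/

/-- A pair `p = (pos, neg)` is admissible for the truncation of `s` to its entries `s 0, …, s n`;
as in `IsSAP`, this includes the condition that the last entry is `(-1) ^ pos`. -/
def IsAdmissible (s : ℕ → ℤ) (n : ℕ) (p : ℕ × ℕ) : Prop :=
  p.1 ≤ signChanges s n ∧
  Even ((signChanges s n : ℤ) - p.1) ∧
  p.2 ≤ signPres s n ∧
  Even ((signPres s n : ℤ) - p.2) ∧
  s n = (-1) ^ p.1

/-- The Rolle-type inequalities and the parity condition under which the pair `q` may directly
follow the pair `p` in a SAP. -/
def IsRolleStep (p q : ℕ × ℕ) : Prop :=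
  p.1 ≤ q.1 + 1 ∧
  p.2 ≤ q.2 + 1 ∧
  p.1 + p.2 ≤ q.1 + q.2 + 1 ∧
  Even ((q.1 : ℤ) + q.2 + 3 - p.1 - p.2)

/-- The set of SAPs for the sign pattern `s` of length `d + 1`, encoded as finite sequences so
that they can be counted. -/
def sapSet (d : ℕ) (s : ℕ → ℤ) : Set (Fin d → ℕ × ℕ) :=
  {pn | IsSAP d s (extendPN d pn)}

section SignPattern

variable {d : ℕ} {s : ℕ → ℤ}

theorem isSAP_iff {f : ℕ → ℕ × ℕ} :
    IsSAP d s f ↔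
      (∀ k < d, IsAdmissible s (d - k) (f k)) ∧
      ∀ k, k + 1 < d → IsRolleStep (f k) (f (k + 1)) :=
  Iff.rfl

theorem isSAP_add_two_iff {f : ℕ → ℕ × ℕ} :
    IsSAP (d + 2) s f ↔
      IsAdmissible s (d + 2) (f 0) ∧ IsRolleStep (f 0) (f 1) ∧
      IsSAP (d + 1) s fun k => f (k + 1) := by
  simp only [isSAP_iff, Nat.add_lt_add_iff_right, Nat.forall_lt_succ_left (n := d + 1),
    Nat.forall_lt_succ_left (n := d), Nat.add_sub_add_right, Nat.sub_zero, zero_add]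
  tauto

theorem extendPN_val (pn : Fin d → ℕ × ℕ) (k : Fin d) : extendPN d pn k = pn k := by
  simp only [extendPN, k.isLt, dif_pos]

theorem extendPN_zero (pn : Fin (d + 1) → ℕ × ℕ) : extendPN (d + 1) pn 0 = pn 0 :=
  extendPN_val pn 0

theorem extendPN_cons_succ (p : ℕ × ℕ) (q : Fin d → ℕ × ℕ) (k : ℕ) :
    extendPN (d + 1) (Fin.cons p q) (k + 1) = extendPN d q k := by
  simp only [extendPN, Nat.add_lt_add_iff_right]
  rfl

theorem cons_mem_sapSet_iff {p : ℕ × ℕ} {q : Fin (d + 1) → ℕ × ℕ} :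
    (Fin.cons p q : Fin (d + 2) → ℕ × ℕ) ∈ sapSet (d + 2) s ↔
      IsAdmissible s (d + 2) p ∧ IsRolleStep p (q 0) ∧ q ∈ sapSet (d + 1) s := by
  have second : extendPN (d + 2) (Fin.cons p q) 1 = q 0 :=
    (extendPN_cons_succ p q 0).trans (extendPN_zero q)
  simp only [sapSet, Set.mem_ofPred_eq, isSAP_add_two_iff, extendPN_zero, Fin.cons_zero,
    second, extendPN_cons_succ]

theorem isAdmissible_of_mem_sapSet {pn : Fin d → ℕ × ℕ} (h : pn ∈ sapSet d s) (k : Fin d) :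
    IsAdmissible s (d - k) (pn k) := by
  rw [← extendPN_val pn k]
  exact (isSAP_iff.1 h).1 k k.isLt

theorem finite_sapSet (d : ℕ) (s : ℕ → ℤ) : (sapSet d s).Finite := by
  refine (Set.finite_Iic fun k : Fin d => (signChanges s (d - k), signPres s (d - k))).subset ?_
  intro pn hpn k
  obtain ⟨hpos, -, hneg, -⟩ := isAdmissible_of_mem_sapSet hpn k
  exact ⟨hpos, hneg⟩

theorem ncard_sapSet_head_eq {p : ℕ × ℕ} (hp : IsAdmissible s (d + 2) p) :
    {pn ∈ sapSet (d + 2) s | pn 0 = p}.ncard =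
      {q ∈ sapSet (d + 1) s | IsRolleStep p (q 0)}.ncard := by
  rw [← Set.ncard_image_of_injective _
    (Fin.cons_right_injective (α := fun _ : Fin (d + 2) => ℕ × ℕ) p)]
  congr 1
  ext pn
  constructor
  · rintro ⟨hpn, rfl⟩
    rw [← Fin.cons_self_tail pn] at hpn
    obtain ⟨-, hstep, htail⟩ := cons_mem_sapSet_iff.1 hpn
    exact ⟨Fin.tail pn, ⟨htail, hstep⟩, Fin.cons_self_tail pn⟩
  · rintro ⟨q, ⟨hq, hstep⟩, rfl⟩
    exact ⟨cons_mem_sapSet_iff.2 ⟨hp, hstep, hq⟩, rfl⟩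

end SignPattern

section AllPlus

variable {d m : ℕ}

theorem isAdmissible_allPlus_iff {n : ℕ} {p : ℕ × ℕ} :
    IsAdmissible allPlus n p ↔ p.1 = 0 ∧ p.2 ≤ n ∧ p.2 % 2 = n % 2 := by
  have hchanges : signChanges allPlus n = 0 := by simp [signChanges, allPlus]
  have hpres : signPres allPlus n = n := by simp [signPres, allPlus]
  rw [IsAdmissible, hchanges, hpres, Int.even_iff, Int.even_iff]
  constructor
  · omega
  · rintro ⟨hpos, hneg, hparity⟩
    exact ⟨by omega, by omega, hneg, by omega, by rw [hpos]; rfl⟩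

theorem isRolleStep_iff_of_isAdmissible_allPlus {n : ℕ} {p q : ℕ × ℕ}
    (hp : IsAdmissible allPlus (n + 1) p) (hq : IsAdmissible allPlus n q) :
    IsRolleStep p q ↔ p.2 ≤ q.2 + 1 := by
  rw [isAdmissible_allPlus_iff] at hp hq
  rw [IsRolleStep, Int.even_iff]
  omega

theorem head_fst_and_parity_of_mem_sapSet_allPlus {q : Fin (d + 1) → ℕ × ℕ}
    (hq : q ∈ sapSet (d + 1) allPlus) : (q 0).1 = 0 ∧ (q 0).2 % 2 = (d + 1) % 2 := by
  have h := isAdmissible_allPlus_iff.1 (isAdmissible_of_mem_sapSet hq 0)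
  exact ⟨h.1, h.2.2⟩

theorem hNum_succ_eq_ncard :
    hNum (d + 1) m = {pn ∈ sapSet (d + 1) allPlus | pn 0 = (0, m)}.ncard := by
  simp only [hNum, extendPN_zero, sapSet, Set.mem_ofPred_eq]

theorem hNum_add_two_eq_ncard (hm : m ≤ d + 2) (hparity : m % 2 = d % 2) :
    hNum (d + 2) m = {q ∈ sapSet (d + 1) allPlus | m ≤ (q 0).2 + 1}.ncard := by
  have hp : IsAdmissible allPlus (d + 2) (0, m) :=
    isAdmissible_allPlus_iff.2 ⟨rfl, hm, by omega⟩
  rw [hNum_succ_eq_ncard, ncard_sapSet_head_eq hp]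
  congr 1
  ext q
  exact and_congr_right fun hq =>
    isRolleStep_iff_of_isAdmissible_allPlus hp (isAdmissible_of_mem_sapSet hq 0)

theorem hNum_add_two_eq_A (hm : m ≤ 2) (hparity : m % 2 = d % 2) :
    hNum (d + 2) m = A (d + 1) := by
  rw [hNum_add_two_eq_ncard (by omega) hparity]
  refine congrArg Set.ncard (Set.sep_eq_self_iff_mem_true.2 fun q hq => ?_)
  have := (head_fst_and_parity_of_mem_sapSet_allPlus hq).2
  omega

theorem A_eq_hNum_zero_add_hNum_three (hd : Odd d) :
    A (d + 1) = hNum (d + 1) 0 + hNum (d + 2) 3 := by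
  obtain ⟨c, rfl⟩ := hd
  rw [hNum_succ_eq_ncard, hNum_add_two_eq_ncard (by omega) (by omega),
    ← Set.ncard_union_eq _ ((finite_sapSet _ _).sep _) ((finite_sapSet _ _).sep _), ← Set.sep_or]
  · refine congrArg Set.ncard (Set.sep_eq_self_iff_mem_true.2 fun q hq => ?_).symm
    obtain ⟨hpos, hneg⟩ := head_fst_and_parity_of_mem_sapSet_allPlus hq
    rw [Prod.ext_iff]
    omega
  · refine Set.disjoint_left.2 ?_
    rintro q ⟨-, hzero⟩ ⟨-, hge⟩
    rw [hzero] at hge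
    omega

theorem maximal_mem_sapSet_allPlus (d : ℕ) :
    (fun k : Fin d => (0, d - (k : ℕ))) ∈ sapSet d allPlus := by
  have hval : ∀ k < d, extendPN d (fun k : Fin d => (0, d - (k : ℕ))) k = (0, d - k) :=
    fun k hk => extendPN_val _ ⟨k, hk⟩
  have hadm : ∀ k, IsAdmissible allPlus (d - k) (0, d - k) :=
    fun k => isAdmissible_allPlus_iff.2 ⟨rfl, le_rfl, rfl⟩
  refine isSAP_iff.2 ⟨fun k hk => ?_, fun k hk => ?_⟩
  · rw [hval k hk]
    exact hadm k
  · have hsucc : d - k = d - (k + 1) + 1 := by omega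
    rw [hval k (by omega), hval (k + 1) hk,
      isRolleStep_iff_of_isAdmissible_allPlus (hsucc ▸ hadm k) (hadm (k + 1))]
    exact hsucc.le

theorem hNum_lt_hNum_succ_succ (hm : m < d) (hparity : m % 2 = d % 2) :
    hNum d m < hNum (d + 1) (m + 1) := by
  obtain ⟨c, rfl⟩ := Nat.exists_eq_succ_of_ne_zero (Nat.ne_zero_of_lt hm)
  rw [hNum_succ_eq_ncard, hNum_add_two_eq_ncard (by omega) (by omega)]
  refine Set.ncard_lt_ncard ⟨?_, fun hsub => ?_⟩ ((finite_sapSet _ _).sep _)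
  · rintro q ⟨hq, hhead⟩
    exact ⟨hq, by rw [hhead]⟩
  · have hhead : ((0, c + 1) : ℕ × ℕ) = (0, m) :=
      (hsub ⟨maximal_mem_sapSet_allPlus (c + 1), Nat.succ_le_succ hm.le⟩).2
    exact hm.ne' (congrArg Prod.snd hhead)

end AllPlus

/-- For even `d ≥ 4`, `hNum d 0 = hNum d 2 = A (d-1)`; for odd `d ≥ 5`,
`hNum d 1 = A (d-1)` and `2 hNum d 3 > A (d-1)`. -/
theorem stmt15 :
    (∀ d : ℕ, 4 ≤ d → Even d → hNum d 0 = hNum d 2 ∧ hNum d 2 = A (d - 1)) ∧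
    (∀ d : ℕ, 5 ≤ d → Odd d → hNum d 1 = A (d - 1) ∧ A (d - 1) < 2 * hNum d 3) := by
  constructor
  · intro d hd heven
    obtain ⟨e, rfl⟩ := Nat.exists_eq_add_of_le' (show 2 ≤ d by omega)
    rw [Nat.even_iff] at heven
    rw [hNum_add_two_eq_A (m := 0) (by omega) (by omega), hNum_add_two_eq_A le_rfl (by omega)]
    exact ⟨rfl, rfl⟩
  · intro d hd hodd
    obtain ⟨e, rfl⟩ := Nat.exists_eq_add_of_le' (show 3 ≤ d by omega)
    rw [Nat.odd_iff] at hodd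
    refine ⟨hNum_add_two_eq_A (by omega) (by omega), ?_⟩
    calc A (e + 2)
        = hNum (e + 2) 0 + hNum (e + 3) 3 :=
          A_eq_hNum_zero_add_hNum_three (Nat.odd_iff.2 (by omega))
      _ = hNum (e + 2) 2 + hNum (e + 3) 3 := by
          rw [hNum_add_two_eq_A (m := 0) (by omega) (by omega), hNum_add_two_eq_A le_rfl (by omega)]
      _ < hNum (e + 3) 3 + hNum (e + 3) 3 :=
          Nat.add_lt_add_right (hNum_lt_hNum_succ_succ (by omega) (by omega)) _
      _ = 2 * hNum (e + 3) 3 := (two_mul _).symm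
end
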